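/- If $(x,y,z,n)$ is a solution in positive integers of the equation $3^x + 2^y = n^z$ with $z > 1$, then $(x,y,z,n) = (2,4,2,5)$, i.e. the only such solution is $3^2 + 2^4 = 5^2$. -/

import Mathlib

/-!
If `n ^ z` is a square, factoring `m ^ 2 - (2 ^ j) ^ 2 = 3 ^ x` leaves only `3 ^ 2 + 2 ^ 4 = 5 ^ 2`.
If `z` is a multiple of `3` and `x ≥ 2`, then `3 ∣ y` modulo `9`, and factoring a difference of two
cubes gives a contradiction.

Otherwise `z = 2 k + 1` and `n` is not a square. Write `3 ^ x = r X ^ 2` and `2 ^ y = s Y ^ 2` with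
`X`, `Y` powers of `3` and `2`, and `(r, s)` one of `(1, 4)`, `(1, 2)`, `(3, 1)`, `(3, 2)`. Thue's
lemma gives `n = r a ^ 2 + s b ^ 2` with `a : b` congruent to `X : Y` modulo `n`; as `n ^ z` has
only one representation by the form `r X ^ 2 + s Y ^ 2` lying over this residue class up to signs,
`X √r + Y √(-s)` agrees up to signs with `(a √r + b √(-s)) ^ z = P a √r + Q b √(-s)`. Here `Q` is
odd and divides a power of `2`, while `P` divides `X`, a power of `3`, and is prime to `3`: either
`x = 1` and `X = 1`, or `P` is congruent to `± z (s b ^ 2) ^ k` modulo `3` and `3 ∤ z`. Hence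
`P ^ 2 = Q ^ 2 = 1`, and taking norms `n ^ z = r a ^ 2 + s b ^ 2 = n`, which is absurd.
-/

/-- The coefficients `(P, Q)` of the odd power `(√R + √(-S)) ^ (2 * k + 1) = P √R + Q √(-S)`, by
the recursion that multiplication by `(√R + √(-S)) ^ 2 = R - S + 2 √R √(-S)` induces on them. -/
def oddPowCoeff {A : Type*} [CommRing A] (R S : A) : ℕ → A × A
  | 0 => (1, 1)
  | k + 1 =>
    let (P, Q) := oddPowCoeff R S k
    ((R - S) * P - 2 * S * Q, (R - S) * Q + 2 * R * P)

namespace oddPowCoeff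

variable {A : Type*} [CommRing A] (R S : A) (k : ℕ)

lemma mul_sq_add_mul_sq :
    R * (oddPowCoeff R S k).1 ^ 2 + S * (oddPowCoeff R S k).2 ^ 2 = (R + S) ^ (2 * k + 1) := by
  induction k with
  | zero => simp [oddPowCoeff]
  | succ k ih =>
    simp only [oddPowCoeff]
    linear_combination (R + S) ^ 2 * ih

lemma odd_snd {R S : A} (h : Odd (R + S)) : Odd (oddPowCoeff R S k).2 := by
  have hsub : Odd (R - S) := by
    rw [show R - S = R + S - 2 * S by ring]
    exact h.sub_even (even_two_mul S)
  induction k with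
  | zero => exact odd_one
  | succ k ih => exact (hsub.mul ih).add_even ((even_two_mul R).mul_right _)

lemma add_dvd_sub :
    R + S ∣ (oddPowCoeff R S k).1 - (-4 * S) ^ k ∧
      R + S ∣ (oddPowCoeff R S k).2 - (-4 * S) ^ k := by
  induction k with
  | zero => simp [oddPowCoeff]
  | succ k ih =>
    obtain ⟨⟨c, hc⟩, d, hd⟩ := ih
    simp only [oddPowCoeff]
    constructor
    · exact ⟨(oddPowCoeff R S k).1 - 2 * S * (c + d), by linear_combination -2 * S * (hc + hd)⟩
    · exact ⟨(oddPowCoeff R S k).2 + 2 * (oddPowCoeff R S k).1 - 2 * S * (c + d),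
        by linear_combination -2 * S * (hc + hd)⟩

lemma dvd_snd_sub : R ∣ (oddPowCoeff R S k).2 - (-S) ^ k := by
  induction k with
  | zero => simp [oddPowCoeff]
  | succ k ih =>
    obtain ⟨d, hd⟩ := ih
    simp only [oddPowCoeff]
    exact ⟨(oddPowCoeff R S k).2 + 2 * (oddPowCoeff R S k).1 - S * d,
      by linear_combination -S * hd⟩

lemma dvd_fst_sub : R ∣ (oddPowCoeff R S k).1 - (2 * k + 1 : ℕ) * (-S) ^ k := by
  induction k with
  | zero => simp [oddPowCoeff]
  | succ k ih =>
    obtain ⟨c, hc⟩ := ih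
    obtain ⟨d, hd⟩ := dvd_snd_sub R S k
    simp only [oddPowCoeff]
    refine ⟨(oddPowCoeff R S k).1 - S * c - 2 * S * d, ?_⟩
    push_cast at hc ⊢
    linear_combination -S * hc - 2 * S * hd

lemma not_dvd_fst {R S p : A} (hp : Prime p) (hR : p ∣ R) (hS : ¬p ∣ S)
    (hk : ¬p ∣ (2 * k + 1 : ℕ)) : ¬p ∣ (oddPowCoeff R S k).1 := by
  intro h
  have hmul : p ∣ (2 * k + 1 : ℕ) * (-S) ^ k :=
    (dvd_sub_right h).1 (hR.trans (dvd_fst_sub R S k))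
  rcases hp.dvd_or_dvd hmul with h' | h'
  · exact hk h'
  · exact hS (dvd_neg.1 (hp.dvd_of_dvd_pow h'))

end oddPowCoeff

lemma sq_eq_sq_of_isCoprime_cross {r s X Y U V N : ℤ} (hrs : 2 ≤ r * s) (hN : 0 < N)
    (hXY : r * X ^ 2 + s * Y ^ 2 = N) (hUV : r * U ^ 2 + s * V ^ 2 = N)
    (hcop : IsCoprime N (r * (U * Y + V * X))) : X ^ 2 = U ^ 2 ∧ Y ^ 2 = V ^ 2 := by
  obtain ⟨w, hw⟩ : N ∣ U * Y - V * X := by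
    refine hcop.dvd_of_dvd_mul_left ⟨Y ^ 2 - V ^ 2, ?_⟩
    linear_combination Y ^ 2 * hUV - V ^ 2 * hXY
  have brahmagupta : (r * U * X + s * V * Y) ^ 2 + N ^ 2 * (r * s * w ^ 2) = N ^ 2 := by
    linear_combination (r * X ^ 2 + s * Y ^ 2) * hUV + N * hXY
      - r * s * (U * Y - V * X + N * w) * hw
  have hbound : r * s * w ^ 2 ≤ 1 := by
    refine le_of_mul_le_mul_left (a := N ^ 2) ?_ (by positivity)
    linarith [sq_nonneg (r * U * X + s * V * Y)]
  have hw0 : w = 0 := by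
    by_contra hne
    have : 0 < w ^ 2 := by positivity
    nlinarith
  have hcross : U * Y = V * X := by rw [hw0, mul_zero] at hw; linarith
  constructor
  · refine mul_left_cancel₀ hN.ne' ?_
    linear_combination U ^ 2 * hXY - X ^ 2 * hUV - s * (U * Y + V * X) * hcross
  · refine mul_left_cancel₀ hN.ne' ?_
    linear_combination V ^ 2 * hXY - Y ^ 2 * hUV + r * (U * Y + V * X) * hcross

/-- `n = r a² + s b²` for some `a`, `b` with `a : b` congruent to `X : Y` modulo `n`. When `n`
divides `r X² + s Y²`, this selects, among the conjugates of norm `n`, the factor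
`a √r + b √(-s)` of `X √r + Y √(-s)`. -/
def HasAlignedRep (r s X Y n : ℤ) : Prop :=
  ∃ a b : ℤ, r * a ^ 2 + s * b ^ 2 = n ∧ n ∣ a * Y - b * X

lemma HasAlignedRep.symm {r s X Y n : ℤ} (h : HasAlignedRep r s X Y n) :
    HasAlignedRep s r Y X n := by
  obtain ⟨a, b, hab, hd⟩ := h
  exact ⟨b, a, by rw [add_comm, hab], (dvd_sub_comm).1 hd⟩

lemma isCoprime_right_of_aligned {r s a b X Y n : ℤ} (hn : n ≠ 0) (hY : IsCoprime n Y)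
    (hab : r * a ^ 2 + s * b ^ 2 = n) (hd : n ∣ a * Y - b * X)
    (hXY : n ∣ r * X ^ 2 + s * Y ^ 2) : IsCoprime n b := by
  obtain ⟨m, hm⟩ := hd
  obtain ⟨M, hM⟩ := hXY
  have hYsq : Y ^ 2 = b * (b * M + 2 * r * X * m) + n * (r * m ^ 2) := by
    refine mul_left_cancel₀ hn ?_
    linear_combination -Y ^ 2 * hab + r * (a * Y + b * X + n * m) * hm + b ^ 2 * hM
  have hcop : IsCoprime n (Y ^ 2) := hY.pow_right
  rw [hYsq] at hcop
  exact hcop.of_add_mul_left_right.of_mul_right_left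

theorem sq_eq_sq_oddPowCoeff {r s a b X Y n : ℤ} {k : ℕ} (hrs : 2 ≤ r * s) (hn : 0 < n)
    (h2 : IsCoprime n 2) (hr : IsCoprime n r) (hs : IsCoprime n s) (hX : IsCoprime n X)
    (hY : IsCoprime n Y) (hab : r * a ^ 2 + s * b ^ 2 = n) (hd : n ∣ a * Y - b * X)
    (hXY : r * X ^ 2 + s * Y ^ 2 = n ^ (2 * k + 1)) :
    X ^ 2 = (a * (oddPowCoeff (r * a ^ 2) (s * b ^ 2) k).1) ^ 2 ∧
      Y ^ 2 = (b * (oddPowCoeff (r * a ^ 2) (s * b ^ 2) k).2) ^ 2 := by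
  have hb : IsCoprime n b :=
    isCoprime_right_of_aligned hn.ne' hY hab hd (hXY ▸ dvd_pow_self n (by omega))
  have hnorm := oddPowCoeff.mul_sq_add_mul_sq (r * a ^ 2) (s * b ^ 2) k
  have hmod := oddPowCoeff.add_dvd_sub (r * a ^ 2) (s * b ^ 2) k
  rw [hab] at hnorm hmod
  set P := (oddPowCoeff (r * a ^ 2) (s * b ^ 2) k).1
  set Q := (oddPowCoeff (r * a ^ 2) (s * b ^ 2) k).2
  have hcross : IsCoprime n (a * P * Y + b * Q * X) := by
    obtain ⟨⟨c, hc⟩, d, hd'⟩ := hmod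
    obtain ⟨m, hm⟩ := hd
    have hcongr : a * P * Y + b * Q * X =
        b * X * (2 * (-(2 * 2) * (s * b ^ 2)) ^ k) + n * (m * P + b * X * (c + d)) := by
      linear_combination P * hm + b * X * (hc + hd')
    rw [hcongr, IsCoprime.add_mul_left_right_iff]
    exact (hb.mul_right hX).mul_right <| h2.mul_right
      ((h2.mul_right h2).neg_right.mul_right (hs.mul_right hb.pow_right)).pow_right
  exact sq_eq_sq_of_isCoprime_cross hrs (pow_pos hn _) hXY (by linear_combination hnorm)
    (hr.mul_right hcross).pow_left

lemma sq_eq_one_of_prime_pow_sq_eq {p b d : ℤ} {l : ℕ} (hp : Prime p) (hpd : ¬p ∣ d)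
    (h : (p ^ l) ^ 2 = (b * d) ^ 2) : d ^ 2 = 1 := by
  have hd : d ∣ (p ^ l) ^ 2 := h ▸ (dvd_mul_left d b).pow two_ne_zero
  exact Int.isUnit_sq <| (hp.coprime_iff_not_dvd.2 hpd).pow_left.pow_left.symm.isUnit_of_dvd hd

lemma exists_sq_lt_dvd_mul_sub_mul {n : ℕ} (hn : ¬IsSquare n) (X Y : ℤ) :
    ∃ a b : ℤ, (a ≠ 0 ∨ b ≠ 0) ∧ a ^ 2 < n ∧ b ^ 2 < n ∧ (n : ℤ) ∣ a * Y - b * X := by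
  have : NeZero n := ⟨by rintro rfl; exact hn (IsSquare.zero)⟩
  set q := n.sqrt
  have hlt : n < (q + 1) * (q + 1) := Nat.lt_succ_sqrt n
  have hgt : q * q < n := (Nat.sqrt_le n).lt_of_ne fun h => hn ⟨q, h.symm⟩
  obtain ⟨u, v, huv, heq⟩ := Fintype.exists_ne_map_eq_of_card_lt
    (fun u : Fin (q + 1) × Fin (q + 1) => (((u.1 : ℕ) * Y - (u.2 : ℕ) * X : ℤ) : ZMod n))
    (by simpa [ZMod.card] using hlt)
  have hsq (i j : Fin (q + 1)) : ((i : ℤ) - (j : ℤ)) ^ 2 < n := by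
    have : ((i : ℤ) - (j : ℤ)) ^ 2 ≤ (q : ℤ) ^ 2 := sq_le_sq' (by omega) (by omega)
    have : (q : ℤ) * q < n := by exact_mod_cast hgt
    linarith
  refine ⟨u.1 - v.1, u.2 - v.2, ?_, hsq _ _, hsq _ _, ?_⟩
  · by_contra! h
    exact huv (Prod.ext (Fin.ext (by omega)) (Fin.ext (by omega)))
  · convert (ZMod.intCast_eq_intCast_iff_dvd_sub _ _ _).1 heq.symm using 1
    ring

lemma exists_aligned_rep_mul {r s X Y : ℤ} {n : ℕ} (hr : 0 < r) (hs : 0 < s) (hn : ¬IsSquare n)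
    (hY : IsCoprime (n : ℤ) Y) (hXY : (n : ℤ) ∣ r * X ^ 2 + s * Y ^ 2) :
    ∃ q a b : ℤ, 0 < q ∧ q < r + s ∧ r * a ^ 2 + s * b ^ 2 = q * n ∧ (n : ℤ) ∣ a * Y - b * X := by
  obtain ⟨a, b, hne, ha, hb, hd⟩ := exists_sq_lt_dvd_mul_sub_mul hn X Y
  obtain ⟨q, hq⟩ : (n : ℤ) ∣ r * a ^ 2 + s * b ^ 2 := by
    obtain ⟨m, hm⟩ := hd
    obtain ⟨M, hM⟩ := hXY
    refine (hY.pow_right (n := 2)).dvd_of_dvd_mul_left ⟨b ^ 2 * M + r * m * (a * Y + b * X), ?_⟩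
    linear_combination b ^ 2 * hM + r * (a * Y + b * X) * hm
  have hn0 : (0 : ℤ) < n := (sq_nonneg a).trans_lt ha
  have hpos : 0 < r * a ^ 2 + s * b ^ 2 := by
    rcases hne with h | h <;> positivity
  refine ⟨q, a, b, ?_, ?_, by rw [hq, mul_comm], hd⟩
  · exact pos_of_mul_pos_right (hq ▸ hpos) hn0.le
  · refine lt_of_mul_lt_mul_left (a := (n : ℤ)) ?_ hn0.le
    rw [← hq]
    nlinarith

lemma hasAlignedRep_of_sq_add_mul_sq_eq_mul {p a b X Y n : ℤ} (hp : Prime p)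
    (hpn : IsCoprime n p) (hY : IsCoprime n Y) (hXY : n ∣ 1 * X ^ 2 + p * Y ^ 2)
    (hab : 1 * a ^ 2 + p * b ^ 2 = p * n) (hd : n ∣ a * Y - b * X) :
    HasAlignedRep 1 p X Y n := by
  obtain ⟨c, rfl⟩ : p ∣ a := hp.dvd_of_dvd_pow (n := 2) ⟨n - b ^ 2, by linear_combination hab⟩
  refine ⟨b, -c, mul_left_cancel₀ hp.ne_zero (by linear_combination hab), ?_⟩
  refine (hpn.mul_right hY).dvd_of_dvd_mul_left ?_
  convert (hXY.mul_left b).add (hd.mul_left X) using 1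
  ring

lemma hasAlignedRep_one_four {X Y : ℤ} {n : ℕ} (hn : ¬IsSquare n) (h2 : IsCoprime (n : ℤ) 2)
    (hY : IsCoprime (n : ℤ) Y) (hXY : (n : ℤ) ∣ 1 * X ^ 2 + 4 * Y ^ 2) :
    HasAlignedRep 1 4 X Y n := by
  have hXY' : (n : ℤ) ∣ 1 * X ^ 2 + 1 * (2 * Y) ^ 2 := by convert hXY using 1; ring
  obtain ⟨q, a, b, hq0, hq1, hab, hd⟩ :=
    exists_aligned_rep_mul one_pos one_pos hn (h2.mul_right hY) hXY'
  obtain rfl : q = 1 := by omega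
  have heven : Even a ∨ Even b := by
    by_contra! h
    rw [Int.not_even_iff_odd, Int.not_even_iff_odd] at h
    have hdvd : (2 : ℤ) ∣ n := by
      rw [← one_mul (n : ℤ), ← hab, one_mul, one_mul]
      exact (h.1.pow.add_odd h.2.pow).two_dvd
    exact Int.prime_two.not_isUnit (h2.isUnit_of_dvd' hdvd dvd_rfl)
  rcases heven with ha | hb
  · obtain ⟨c, rfl⟩ := ha.two_dvd
    refine ⟨b, -c, by linear_combination hab, ?_⟩
    refine ((h2.mul_right h2).mul_right hY).dvd_of_dvd_mul_left ?_
    convert (hXY.mul_left b).add (hd.mul_left X) using 1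
    ring
  · obtain ⟨c, rfl⟩ := hb.two_dvd
    obtain ⟨m, hm⟩ := hd
    exact ⟨a, c, by linear_combination hab,
      h2.dvd_of_dvd_mul_left ⟨m, by linear_combination hm⟩⟩

lemma hasAlignedRep_one_two {X Y : ℤ} {n : ℕ} (hn : ¬IsSquare n) (h2 : IsCoprime (n : ℤ) 2)
    (hY : IsCoprime (n : ℤ) Y) (hXY : (n : ℤ) ∣ 1 * X ^ 2 + 2 * Y ^ 2) :
    HasAlignedRep 1 2 X Y n := by
  obtain ⟨q, a, b, hq0, hq1, hab, hd⟩ :=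
    exists_aligned_rep_mul one_pos two_pos hn hY hXY
  obtain rfl | rfl : q = 1 ∨ q = 2 := by omega
  · exact ⟨a, b, by rw [hab, one_mul], hd⟩
  · exact hasAlignedRep_of_sq_add_mul_sq_eq_mul Int.prime_two h2 hY hXY hab hd

lemma sq_emod_three (a : ℤ) : a ^ 2 % 3 = 0 ∨ a ^ 2 % 3 = 1 := by
  have : a % 3 = 0 ∨ a % 3 = 1 ∨ a % 3 = 2 := by omega
  rcases this with h | h | h <;> simp [pow_two, Int.mul_emod, h]

lemma hasAlignedRep_one_three {X Y : ℤ} {n : ℕ} (hn : ¬IsSquare n) (h3 : n % 3 = 1)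
    (hY : IsCoprime (n : ℤ) Y) (hXY : (n : ℤ) ∣ 1 * X ^ 2 + 3 * Y ^ 2) :
    HasAlignedRep 1 3 X Y n := by
  obtain ⟨q, a, b, hq0, hq1, hab, hd⟩ :=
    exists_aligned_rep_mul one_pos three_pos hn hY hXY
  have hcop : IsCoprime (n : ℤ) 3 :=
    (Int.prime_three.coprime_iff_not_dvd.2 (by omega)).symm
  have := sq_emod_three a
  obtain rfl | rfl | rfl : q = 1 ∨ q = 2 ∨ q = 3 := by omega
  · exact ⟨a, b, by rw [hab, one_mul], hd⟩
  · omega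
  · exact hasAlignedRep_of_sq_add_mul_sq_eq_mul Int.prime_three hcop hY hXY hab hd

lemma hasAlignedRep_three_two {X Y : ℤ} {n : ℕ} (hn : ¬IsSquare n) (h2 : IsCoprime (n : ℤ) 2)
    (h3 : n % 3 = 2) (hY : IsCoprime (n : ℤ) Y) (hXY : (n : ℤ) ∣ 3 * X ^ 2 + 2 * Y ^ 2) :
    HasAlignedRep 3 2 X Y n := by
  obtain ⟨q, a, b, hq0, hq1, hab, hd⟩ :=
    exists_aligned_rep_mul three_pos two_pos hn hY hXY
  have hb := sq_emod_three b
  obtain rfl | rfl | rfl | rfl : q = 1 ∨ q = 2 ∨ q = 3 ∨ q = 4 := by omega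
  · exact ⟨a, b, by rw [hab, one_mul], hd⟩
  · omega
  · obtain ⟨c, rfl⟩ : 3 ∣ b := Int.prime_three.dvd_of_dvd_pow (n := 2) (by omega)
    have := sq_emod_three a
    ring_nf at hab
    omega
  · obtain ⟨c, rfl⟩ : 2 ∣ a := Int.prime_two.dvd_of_dvd_pow (n := 2) (by omega)
    obtain ⟨d, rfl⟩ : 2 ∣ b := Int.prime_two.dvd_of_dvd_pow (n := 2) (by ring_nf at hab ⊢; omega)
    obtain ⟨m, hm⟩ := hd
    exact ⟨c, d, by linarith, h2.dvd_of_dvd_mul_left ⟨m, by linear_combination hm⟩⟩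

lemma isCoprime_two_and_three {x y z n : ℕ} (hx : 0 < x) (hy : 0 < y) (hz : 0 < z)
    (h : 3 ^ x + 2 ^ y = n ^ z) : IsCoprime (n : ℤ) 2 ∧ IsCoprime (n : ℤ) 3 := by
  have hint : (n : ℤ) ^ z = 3 ^ x + 2 ^ y := by exact_mod_cast h.symm
  have h32 : IsCoprime (3 : ℤ) 2 := ⟨1, -1, by norm_num⟩
  constructor
  · rw [← IsCoprime.pow_iff hz hy, hint]
    simpa using h32.pow.add_mul_right_left 1
  · rw [← IsCoprime.pow_iff hz hx, hint, add_comm]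
    simpa using h32.symm.pow.add_mul_right_left 1

lemma modEq_three_of_three_pow_add {x k : ℕ} {t n : ℤ} (hx : 0 < x)
    (h : 3 ^ x + t = n ^ (2 * k + 1)) : n ≡ t [ZMOD 3] := by
  have hcast : (3 : ZMod 3) ^ x + t = n ^ (2 * k + 1) := by
    exact_mod_cast congrArg (Int.cast : ℤ → ZMod 3) h
  have hpow (u : ZMod 3) : u ^ (2 * k + 1) = u := by
    have : u = 0 ∨ u ^ 2 = 1 := by decide +revert
    rcases this with rfl | hu
    · simp
    · rw [pow_succ, pow_mul, hu, one_pow, one_mul]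
  rw [hpow, show (3 : ZMod 3) = 0 by decide, zero_pow hx.ne', zero_add] at hcast
  exact ((ZMod.intCast_eq_intCast_iff _ _ 3).1 hcast).symm

lemma exists_hasAlignedRep {x y k n : ℕ} (hx : 0 < x) (hy : 0 < y) (hn : ¬IsSquare n)
    (h : 3 ^ x + 2 ^ y = n ^ (2 * k + 1)) :
    ∃ (r s : ℤ) (m l : ℕ), 2 ≤ r * s ∧ r * (3 ^ m) ^ 2 = 3 ^ x ∧ s * (2 ^ l) ^ 2 = 2 ^ y ∧
      HasAlignedRep r s (3 ^ m) (2 ^ l) n := by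
  obtain ⟨h2, h3⟩ := isCoprime_two_and_three hx hy (by omega) h
  have hint : (3 : ℤ) ^ x + 2 ^ y = (n : ℤ) ^ (2 * k + 1) := by exact_mod_cast h
  have hdvd {r s : ℤ} {m l : ℕ} (hX : r * (3 ^ m) ^ 2 = 3 ^ x) (hY : s * (2 ^ l) ^ 2 = 2 ^ y) :
      (n : ℤ) ∣ r * (3 ^ m) ^ 2 + s * (2 ^ l) ^ 2 := by
    rw [hX, hY, hint]
    exact dvd_pow_self _ (by omega)
  have hn3 : ¬(3 : ℤ) ∣ n := Int.prime_three.coprime_iff_not_dvd.1 h3.symm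
  have hmod : (n : ℤ) % 3 = 2 ^ y % 3 := modEq_three_of_three_pow_add hx hint
  have hsq (l : ℕ) := sq_emod_three (2 ^ l)
  obtain ⟨m, rfl | rfl⟩ := Nat.even_or_odd' x <;> obtain ⟨l, rfl | rfl⟩ := Nat.even_or_odd' y
  · obtain ⟨l, rfl⟩ : ∃ j, l = j + 1 := ⟨l - 1, by omega⟩
    have hX : 1 * ((3 : ℤ) ^ m) ^ 2 = 3 ^ (2 * m) := by ring
    have hY : 4 * ((2 : ℤ) ^ l) ^ 2 = 2 ^ (2 * (l + 1)) := by ring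
    exact ⟨1, 4, m, l, by norm_num, hX, hY,
      hasAlignedRep_one_four hn h2 h2.pow_right (hdvd hX hY)⟩
  · have hX : 1 * ((3 : ℤ) ^ m) ^ 2 = 3 ^ (2 * m) := by ring
    have hY : 2 * ((2 : ℤ) ^ l) ^ 2 = 2 ^ (2 * l + 1) := by ring
    exact ⟨1, 2, m, l, by norm_num, hX, hY,
      hasAlignedRep_one_two hn h2 h2.pow_right (hdvd hX hY)⟩
  · have hX : 3 * ((3 : ℤ) ^ m) ^ 2 = 3 ^ (2 * m + 1) := by ring
    have hY : 1 * ((2 : ℤ) ^ l) ^ 2 = 2 ^ (2 * l) := by ring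
    have hdvd' : (n : ℤ) ∣ 1 * (2 ^ l) ^ 2 + 3 * (3 ^ m) ^ 2 := by
      rw [add_comm]
      exact hdvd hX hY
    have := hsq l
    exact ⟨3, 1, m, l, by norm_num, hX, hY,
      (hasAlignedRep_one_three hn (by omega) h3.pow_right hdvd').symm⟩
  · have hX : 3 * ((3 : ℤ) ^ m) ^ 2 = 3 ^ (2 * m + 1) := by ring
    have hY : 2 * ((2 : ℤ) ^ l) ^ 2 = 2 ^ (2 * l + 1) := by ring
    have := hsq l
    exact ⟨3, 2, m, l, by norm_num, hX, hY,
      hasAlignedRep_three_two hn h2 (by omega) h2.pow_right (hdvd hX hY)⟩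

lemma not_three_dvd_fst_oddPowCoeff {R S : ℤ} {x k : ℕ} (hx : 0 < x) (hS : ¬3 ∣ S)
    (hP : R * (oddPowCoeff R S k).1 ^ 2 = 3 ^ x) (hQ : (oddPowCoeff R S k).2 ^ 2 = 1)
    (hxk : x = 1 ∨ ¬3 ∣ 2 * k + 1) : ¬3 ∣ (oddPowCoeff R S k).1 := by
  have hnorm := oddPowCoeff.mul_sq_add_mul_sq R S k
  rw [hP, hQ, mul_one] at hnorm
  rcases hxk with rfl | hk
  · rintro ⟨c, hc⟩
    rw [hc] at hP
    have : 9 * (R * c ^ 2) = 3 := by linear_combination hP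
    omega
  · have hR : 3 ∣ R := by
      simpa using (modEq_three_of_three_pow_add hx hnorm).symm.dvd
    exact oddPowCoeff.not_dvd_fst k Int.prime_three hR hS (by exact_mod_cast hk)

theorem three_pow_add_two_pow_ne_pow_of_not_isSquare {x y k n : ℕ} (hx : 0 < x) (hy : 0 < y)
    (hk : 0 < k) (hn : ¬IsSquare n) (hxk : x = 1 ∨ ¬3 ∣ 2 * k + 1) :
    3 ^ x + 2 ^ y ≠ n ^ (2 * k + 1) := by
  intro h
  obtain ⟨h2, h3⟩ := isCoprime_two_and_three hx hy (by omega) h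
  obtain ⟨r, s, m, l, hrs, hX, hY, a, b, hab, hd⟩ := exists_hasAlignedRep hx hy hn h
  have hint : r * (3 ^ m) ^ 2 + s * (2 ^ l) ^ 2 = (n : ℤ) ^ (2 * k + 1) := by
    rw [hX, hY]
    exact_mod_cast h
  have hn1 : 1 < n := by
    by_contra! hle
    interval_cases n <;> simp at hn
  have hcr : IsCoprime (n : ℤ) r := (h3.pow_right (n := x)).of_isCoprime_of_dvd_right ⟨_, hX.symm⟩
  have hcs : IsCoprime (n : ℤ) s := (h2.pow_right (n := y)).of_isCoprime_of_dvd_right ⟨_, hY.symm⟩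
  obtain ⟨hXP, hYQ⟩ := sq_eq_sq_oddPowCoeff hrs (by omega) h2 hcr hcs h3.pow_right h2.pow_right
    hab hd hint
  have hnorm := oddPowCoeff.mul_sq_add_mul_sq (r * a ^ 2) (s * b ^ 2) k
  have hQ2 : ¬2 ∣ (oddPowCoeff (r * a ^ 2) (s * b ^ 2) k).2 := by
    have hodd : Odd (r * a ^ 2 + s * b ^ 2) := by
      rw [hab, ← Int.not_even_iff_odd, even_iff_two_dvd]
      exact Int.prime_two.coprime_iff_not_dvd.1 h2.symm
    rw [← even_iff_two_dvd, Int.not_even_iff_odd]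
    exact oddPowCoeff.odd_snd k hodd
  have hQ := sq_eq_one_of_prime_pow_sq_eq Int.prime_two hQ2 hYQ
  have hS : s * b ^ 2 = 2 ^ y := by rw [← hY, hYQ, mul_pow, hQ, mul_one]
  have hS3 : ¬3 ∣ s * b ^ 2 := by
    rw [hS]
    exact fun h3 => by simpa using Int.prime_three.dvd_of_dvd_pow h3
  have hP3 := not_three_dvd_fst_oddPowCoeff hx hS3 (by rw [← hX, hXP]; ring) hQ hxk
  have hP := sq_eq_one_of_prime_pow_sq_eq Int.prime_three hP3 hXP
  rw [hP, hQ, mul_one, mul_one, hab] at hnorm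
  have : 2 * k + 1 = 1 := (Nat.pow_eq_self_iff hn1).1 (by exact_mod_cast hnorm.symm)
  omega

lemma eq_one_of_mul_add_eq_prime_pow {p d c k : ℕ} (hp : p.Prime) (hc : ¬p ∣ c)
    (h : d * (d + c) = p ^ k) : d = 1 := by
  obtain ⟨i, -, hi⟩ := (Nat.dvd_prime_pow hp).1 (Dvd.intro _ h)
  obtain ⟨j, -, hj⟩ := (Nat.dvd_prime_pow hp).1 (Dvd.intro_left _ h)
  rcases i.eq_zero_or_pos with rfl | hi0
  · simpa using hi
  have hpd : p ∣ d := hi ▸ dvd_pow_self p hi0.ne'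
  rcases j.eq_zero_or_pos with rfl | hj0
  · rw [pow_zero] at hj
    have : p ≤ d := Nat.le_of_dvd (hi ▸ pow_pos hp.pos i) hpd
    have := hp.two_le
    omega
  · exact absurd ((Nat.dvd_add_right hpd).1 (hj ▸ dvd_pow_self p hj0.ne')) hc

lemma eq_of_three_pow_eq_two_pow_add_one {x c : ℕ} (hc : 2 ≤ c) (h : 3 ^ x = 2 ^ c + 1) :
    x = 2 ∧ c = 3 := by
  obtain ⟨e, rfl⟩ := Nat.exists_eq_add_of_le' hc
  obtain ⟨g, rfl | rfl⟩ := Nat.even_or_odd' x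
  · obtain ⟨t, ht⟩ : Odd (3 ^ g) := Odd.pow (by decide)
    have hfactor : t * (t + 1) = 2 ^ e := by
      rw [pow_mul', ht, pow_add] at h
      linarith
    obtain rfl := eq_one_of_mul_add_eq_prime_pow Nat.prime_two (by decide) hfactor
    have hg : g = 1 := (Nat.prime_three.pow_eq_iff.1 ht).2
    have he : e = 1 := (Nat.prime_two.pow_eq_iff.1 hfactor.symm).2
    exact ⟨by rw [hg], by rw [he]⟩
  · have hmod : 3 ^ (2 * g + 1) % 4 = 3 := by
      rw [pow_succ, pow_mul, Nat.mul_mod, Nat.pow_mod]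
      simp
    have : 2 ^ (e + 2) = 4 * 2 ^ e := by ring
    omega

lemma even_of_three_pow_add_two_pow_eq_sq {x y m : ℕ} (hx : 0 < x)
    (h : 3 ^ x + 2 ^ y = m ^ 2) : Even y := by
  by_contra hy
  obtain ⟨l, rfl⟩ := Nat.not_even_iff_odd.1 hy
  have h3x : 3 ∣ 3 ^ x := dvd_pow_self 3 hx.ne'
  have h3l : ¬3 ∣ (2 ^ l) ^ 2 := fun h3 => by
    simpa using Nat.prime_three.dvd_of_dvd_pow (Nat.prime_three.dvd_of_dvd_pow h3)
  have hl := sq_emod_three (2 ^ l)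
  have hm := sq_emod_three m
  rw [pow_succ, pow_mul'] at h
  norm_cast at hl hm
  omega

theorem eq_of_three_pow_add_two_pow_eq_sq {x y m : ℕ} (hx : 0 < x) (hy : 0 < y)
    (h : 3 ^ x + 2 ^ y = m ^ 2) : x = 2 ∧ y = 4 ∧ m = 5 := by
  obtain ⟨j, rfl⟩ := (even_of_three_pow_add_two_pow_eq_sq hx h).two_dvd
  rw [pow_mul'] at h
  have hlt : 2 ^ j < m := lt_of_pow_lt_pow_left₀ 2 m.zero_le (by rw [← h]; simp)
  obtain ⟨d, rfl⟩ := Nat.exists_eq_add_of_lt hlt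
  have hfactor : (d + 1) * (d + 1 + 2 ^ (j + 1)) = 3 ^ x := by
    rw [pow_succ]
    linarith
  have hd : d + 1 = 1 := eq_one_of_mul_add_eq_prime_pow Nat.prime_three
    (fun h3 => by simpa using Nat.prime_three.dvd_of_dvd_pow h3) hfactor
  obtain rfl : d = 0 := by omega
  obtain ⟨rfl, hj⟩ := eq_of_three_pow_eq_two_pow_add_one (c := j + 1) (by omega)
    (by rw [← hfactor]; ring)
  obtain rfl : j = 2 := by omega
  exact ⟨rfl, rfl, rfl⟩

lemma three_dvd_of_three_pow_add_two_pow_eq_cube {x y m : ℕ} (hx : 2 ≤ x)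
    (h : 3 ^ x + 2 ^ y = m ^ 3) : 3 ∣ y := by
  have hcast : (3 : ZMod 9) ^ x + 2 ^ y = m ^ 3 := by
    exact_mod_cast congrArg (Nat.cast : ℕ → ZMod 9) h
  have hthree : (3 : ZMod 9) ^ x = 0 := by
    rw [← Nat.add_sub_of_le hx, pow_add, show (3 : ZMod 9) ^ 2 = 0 by decide, zero_mul]
  have hnot_cube (u : ZMod 9) : u ^ 3 ≠ 2 ∧ u ^ 3 ≠ -2 ∧ u ^ 3 ≠ 4 ∧ u ^ 3 ≠ -4 := by
    decide +revert
  obtain ⟨hp2, hm2, hp4, hm4⟩ := hnot_cube m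
  rw [hthree, zero_add, ← Nat.div_add_mod y 3, pow_add, pow_mul,
    show (2 : ZMod 9) ^ 3 = -1 by decide] at hcast
  have hlt : y % 3 < 3 := Nat.mod_lt _ three_pos
  rcases neg_one_pow_eq_or (ZMod 9) (y / 3) with hs | hs <;> rw [hs] at hcast <;>
    interval_cases hy : y % 3 <;> grind

lemma three_pow_add_two_pow_ne_cube {x y m : ℕ} (hx : 2 ≤ x) : 3 ^ x + 2 ^ y ≠ m ^ 3 := by
  intro h
  obtain ⟨j, rfl⟩ := three_dvd_of_three_pow_add_two_pow_eq_cube hx h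
  rw [pow_mul'] at h
  have hu : ¬3 ∣ 2 ^ j := fun h3 => by simpa using Nat.prime_three.dvd_of_dvd_pow h3
  have hlt : 2 ^ j < m := lt_of_pow_lt_pow_left₀ 3 m.zero_le (by rw [← h]; simp)
  obtain ⟨d, rfl⟩ := Nat.exists_eq_add_of_lt hlt
  set u := 2 ^ j
  have hfactor : (d + 1) ^ 3 + 3 * (u * (d + 1) * (u + (d + 1))) = 3 ^ x := by linarith
  obtain ⟨e, he⟩ : 3 ∣ d + 1 := by
    have : 3 ∣ 3 ^ x := dvd_pow_self 3 (by omega)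
    exact Nat.prime_three.dvd_of_dvd_pow (n := 3) (by omega)
  have hdvd : 3 * (e ^ 2 + e * u) + u ^ 2 ∣ 3 ^ x := by
    refine ⟨9 * e, ?_⟩
    rw [← hfactor, he]
    ring
  have hcop : ¬3 ∣ 3 * (e ^ 2 + e * u) + u ^ 2 := fun h3 =>
    hu (Nat.prime_three.dvd_of_dvd_pow ((Nat.dvd_add_right (dvd_mul_right 3 _)).1 h3))
  have hone : 3 * (e ^ 2 + e * u) + u ^ 2 = 1 :=
    ((Nat.prime_three.coprime_iff_not_dvd.2 hcop).pow_left x).symm.eq_one_of_dvd hdvd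
  have : 0 < e ^ 2 := pow_pos (by omega) 2
  omega

lemma eq_of_pow_eq_prime_sq {p n z : ℕ} (hp : p.Prime) (hz : 1 < z) (h : n ^ z = p ^ 2) :
    n = p ∧ z = 2 := by
  obtain ⟨i, -, rfl⟩ := (Nat.dvd_prime_pow hp).1 (h ▸ dvd_pow_self n (by omega))
  rw [← pow_mul] at h
  have hiz : i * z = 2 := Nat.pow_right_injective hp.two_le h
  obtain rfl : z = 2 := ((Nat.dvd_prime Nat.prime_two).1 ⟨i, by rw [mul_comm, hiz]⟩).resolve_left
    hz.ne'
  obtain rfl : i = 1 := by omega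
  exact ⟨pow_one p, rfl⟩

/-- Lemma 2.2: the only solution of `3^x + 2^y = n^z` in positive integers with
`z > 1` is `3^2 + 2^4 = 5^2`. -/
theorem stmt_7 (x y z n : ℕ) (hx : 0 < x) (hy : 0 < y) (hn : 0 < n) (hz : 1 < z)
    (heq : 3 ^ x + 2 ^ y = n ^ z) :
    (x, y, z, n) = (2, 4, 2, 5) := by
  by_cases hsq : IsSquare (n ^ z)
  · obtain ⟨m, hm⟩ := hsq
    rw [← sq] at hm
    obtain ⟨rfl, rfl, rfl⟩ := eq_of_three_pow_add_two_pow_eq_sq hx hy (heq.trans hm)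
    obtain ⟨rfl, rfl⟩ := eq_of_pow_eq_prime_sq Nat.prime_five hz hm
    rfl
  · have hnsq : ¬IsSquare n := fun h => hsq (h.pow z)
    obtain ⟨k, rfl⟩ : Odd z := Nat.not_even_iff_odd.1 fun h => hsq (h.isSquare_pow n)
    by_cases hxk : x = 1 ∨ ¬3 ∣ 2 * k + 1
    · exact absurd heq (three_pow_add_two_pow_ne_pow_of_not_isSquare hx hy (by omega) hnsq hxk)
    · push Not at hxk
      obtain ⟨hx1, t, ht⟩ := hxk
      rw [ht, mul_comm, pow_mul] at heq
      exact absurd heq (three_pow_add_two_pow_ne_cube (by omega))
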